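/- Let ρ = e^{2πi/3} ∈ ℍ, let n ≥ 0, let x_1, …, x_n ∈ (0,1) be pairwise distinct and solve the algebraic system E^n_{8,3,12}, i.e. 8/x_i + 3/(x_i − 1) + Σ_{j≠i} 12/(x_j − x_i) = 0 for all 1 ≤ i ≤ n, and let w_1, …, w_n ∈ ℍ satisfy J(w_i) = x_i. Define f(τ) = η(τ)^{20} / ( E4(τ)² ∏_{i=1}^n (J(τ) − x_i)² ). Then: (1) f is holomorphic and nonvanishing at every τ ∈ ℍ with E4(τ) ≠ 0 and J(τ) ∉ {x_1, …, x_n}; (2) f has double poles with zero residues at τ = ρ and at each w_i, i.e. the limit as τ → w (τ ≠ w) of (d/dτ)[(τ − w)² f(τ)] is 0 for w = ρ and for each w = w_i; (3) for every τ ∈ ℍ with E4(τ) ≠ 0 and J(τ) ∉ {x_1, …, x_n}, one has (d/dτ)(f'(τ)/f(τ)) − (1/2)(f'(τ)/f(τ))² = 2π² ((12n+5)/6)² E4(τ); equivalently, any primitive h of f satisfies {h, τ} = 2π² (12n+5)²/36 · E4(τ). -/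

import Mathlib

open Complex Filter Topology

noncomputable section

/-- The nome `q = e^{2πiτ}`. -/
def qq (τ : ℂ) : ℂ := Complex.exp (2 * Real.pi * Complex.I * τ)

/-- The Eisenstein series `E₄(τ) = 1 + 240 Σ_{n≥1} σ₃(n) qⁿ`. -/
def E4 (τ : ℂ) : ℂ := 1 + 240 * ∑' n : ℕ, (∑ d ∈ (n + 1).divisors, (d : ℂ) ^ 3) * qq τ ^ (n + 1)

/-- The Eisenstein series `E₆(τ) = 1 − 504 Σ_{n≥1} σ₅(n) qⁿ`. -/
def E6 (τ : ℂ) : ℂ := 1 - 504 * ∑' n : ℕ, (∑ d ∈ (n + 1).divisors, (d : ℂ) ^ 5) * qq τ ^ (n + 1)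

/-- The normalized elliptic modular function `J = E₄³ / (E₄³ − E₆²)`. -/
def J (τ : ℂ) : ℂ := E4 τ ^ 3 / (E4 τ ^ 3 - E6 τ ^ 2)

/-- The Dedekind eta function `η(τ) = e^{πiτ/12} ∏_{n≥1} (1 − qⁿ)`. -/
def dedekindEta (τ : ℂ) : ℂ := Complex.exp (Real.pi * Complex.I * τ / 12) * ∏' n : ℕ, (1 - qq τ ^ (n + 1))

/-- The elliptic point `ρ = e^{2πi/3}`. -/
def rho : ℂ := Complex.exp (2 * Real.pi * Complex.I / 3)

/-- `f = η²⁰ / (E₄²·∏ᵢ(J−xᵢ)²)` where the `xᵢ ∈ (0,1)` solve the system `E^n_{8,3,12}`. -/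
def f5 (n : ℕ) (x : Fin n → ℝ) (z : ℂ) : ℂ :=
  dedekindEta z ^ 20 / (E4 z ^ 2 * ∏ i, (J z - (x i : ℂ)) ^ 2)


section RamanujanIdentities

open UpperHalfPlane hiding I
open EisensteinSeries ModularForm Derivative
open scoped Manifold MatrixGroups Real

/-- A function on `ℍ` given by a convergent `q`-expansion tends at `i∞` to its constant term. -/
lemma tendsto_atImInfty_of_hasSum_qExpansion {f : ℍ → ℂ} {c : ℕ → ℂ}
    (hf : ∀ τ : ℍ, HasSum (fun m ↦ c m • Function.Periodic.qParam 1 τ ^ m) (f τ)) :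
    Tendsto f atImInfty (𝓝 (c 0)) := by
  have hbdd : IsBoundedAtImInfty fun τ : ℍ ↦ (f τ - c 0) / Function.Periodic.qParam 1 τ := by
    refine isBoundedAtImInfty_of_hasSum_qExpansion (c := fun m ↦ c (m + 1)) one_pos fun τ ↦ ?_
    have hq : Function.Periodic.qParam 1 (τ : ℂ) ≠ 0 := Function.Periodic.qParam_ne_zero _
    have h := ((hasSum_nat_add_iff' 1).mpr (hf τ)).div_const (Function.Periodic.qParam 1 (τ : ℂ))
    simp only [Finset.sum_range_one, pow_zero, smul_eq_mul, mul_one] at h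
    convert! h using 2 with m
    simp only [smul_eq_mul, pow_succ]
    field_simp
  have h0 : Tendsto (fun τ : ℍ ↦ f τ - c 0) atImInfty (𝓝 0) := by
    have h := hbdd.mul_isLittleO ((Asymptotics.isLittleO_one_iff ℝ).mpr
      (qParam_tendsto_atImInfty one_pos))
    refine (Asymptotics.isLittleO_one_iff ℝ).mp (h.congr (fun τ ↦ ?_) fun τ ↦ ?_)
    · exact div_mul_cancel₀ _ (Function.Periodic.qParam_ne_zero _)
    · simp
  simpa using h0.add_const (c 0)

lemma tendsto_E2_atImInfty : Tendsto EisensteinSeries.E2 atImInfty (𝓝 1) := by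
  simpa using tendsto_atImInfty_of_hasSum_qExpansion
    (c := fun m ↦ if m = 0 then 1 else -24 * ArithmeticFunction.sigma 1 m) fun τ ↦ by
      simpa only [Function.Periodic.qParam, ofReal_one, div_one] using hasSum_qExpansion_E2 (z := τ)

lemma tendsto_E_atImInfty {k : ℕ} (hk : 3 ≤ k) (hk2 : Even k) :
    Tendsto (ModularForm.E hk) atImInfty (𝓝 1) := by
  rw [← E_qExpansion_coeff_zero hk hk2]
  exact tendsto_atImInfty_of_hasSum_qExpansion fun τ ↦
    ModularForm.hasSum_qExpansion (ModularForm.E hk) one_pos one_mem_strictPeriods_SL τ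

/-- The normalized derivative of a holomorphic function bounded at `i∞` vanishes at `i∞`. -/
lemma isZeroAtImInfty_normalizedDeriv {F : ℍ → ℂ} (hF : MDiff F) (hb : IsBoundedAtImInfty F) :
    IsZeroAtImInfty (normalizedDerivOfComplex F) := by
  obtain ⟨M, A, hM⟩ := isBoundedAtImInfty_iff.mp hb
  rw [UpperHalfPlane.mdifferentiable_iff] at hF
  rw [isZeroAtImInfty_iff]
  intro ε hε
  refine ⟨max (2 * |A| + 1) (2 * (|M| + 1) / ε), fun z hz ↦ ?_⟩
  have hz1 : 2 * |A| + 1 ≤ z.im := (le_max_left _ _).trans hz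
  have hz2 : 2 * (|M| + 1) / ε ≤ z.im := (le_max_right _ _).trans hz
  have him (w : ℂ) (hw : w ∈ Metric.closedBall (z : ℂ) (z.im / 2)) : z.im / 2 ≤ w.im := by
    have h1 := (Complex.abs_im_le_norm (w - z)).trans (mem_closedBall_iff_norm.mp hw)
    rw [Complex.sub_im, coe_im] at h1
    linarith [(abs_le.mp h1).1]
  have hderiv : ‖deriv (F ∘ ofComplex) z‖ ≤ |M| / (z.im / 2) := by
    refine Complex.norm_deriv_le_of_forall_mem_sphere_norm_le (by linarith [z.im_pos]) ?_ ?_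
    · refine (hF.mono fun w hw ↦ ?_).diffContOnCl
      have := him w (Metric.closure_ball_subset_closedBall hw)
      exact (by linarith [z.im_pos] : 0 < w.im)
    · intro w hw
      have h2 := him w (Metric.sphere_subset_closedBall hw)
      have h3 : 0 < w.im := by linarith [z.im_pos]
      rw [Function.comp_apply, ofComplex_apply_of_im_pos h3]
      refine (hM _ ?_).trans (le_abs_self M)
      change A ≤ w.im
      linarith [le_abs_self A]
  have hpi : ‖(2 * π * Complex.I : ℂ)⁻¹‖ ≤ 1 := by
    rw [norm_inv]
    apply inv_le_one_of_one_le₀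
    simp only [norm_mul, Complex.norm_ofNat, Complex.norm_real, Complex.norm_I, mul_one,
      Real.norm_eq_abs, abs_of_pos Real.pi_pos]
    linarith [Real.two_le_pi]
  rw [normalizedDerivOfComplex, norm_mul]
  refine (mul_le_of_le_one_left (norm_nonneg _) hpi).trans (hderiv.trans ?_)
  rw [div_le_iff₀ (by linarith [z.im_pos])]
  rw [div_le_iff₀ hε] at hz2
  linarith

/-- There is no nonzero level one holomorphic form of weight less than `12` vanishing at `i∞`. -/
lemma eq_zero_of_slash_invariant_of_isZeroAtImInfty {k : ℤ} (hk : k < 12) {F : ℍ → ℂ}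
    (hF : MDiff F) (hslash : ∀ γ : SL(2, ℤ), F ∣[k] γ = F) (h0 : IsZeroAtImInfty F) : F = 0 := by
  let f : CuspForm 𝒮ℒ k :=
    { toFun := F
      slash_action_eq' := fun _ ⟨γ, hγ⟩ ↦ hγ ▸ hslash γ
      holo' := hF
      zero_at_cusps' := fun hc ↦ by
        rw [Subgroup.IsArithmetic.isCusp_iff_isCusp_SL2Z] at hc
        rw [OnePoint.isZeroAt_iff_forall_SL2Z hc]
        intro γ _
        rw [hslash]
        exact h0 }
  exact congrArg DFunLike.coe
    (rank_zero_iff_forall_zero.mp (CuspForm.rank_eq_zero_of_weight_lt_twelve hk) f)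

lemma ModularForm.slash_SL_eq {k : ℤ} (f : ModularForm 𝒮ℒ k) (γ : SL(2, ℤ)) : (⇑f) ∣[k] γ = ⇑f :=
  SlashInvariantFormClass.slash_action_eq f _ ⟨γ, rfl⟩

lemma isZeroAtImInfty_serreDerivative_add {k : ℂ} {F G : ℍ → ℂ} (hF : MDiff F)
    (hF1 : Tendsto F atImInfty (𝓝 1)) (hG : Tendsto G atImInfty (𝓝 (k / 12))) :
    IsZeroAtImInfty (serreDerivative k F + G) := by
  have hD : Tendsto _ _ _ := isZeroAtImInfty_normalizedDeriv hF (hF1.isBigO_one ℝ)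
  have := (hD.sub ((tendsto_E2_atImInfty.const_mul (k * 12⁻¹)).mul hF1)).add hG
  rw [show 0 - k * 12⁻¹ * 1 * 1 + k / 12 = 0 by ring] at this
  exact this

/-- Ramanujan's identity `D E₄ = (E₂ E₄ - E₆) / 3`. -/
lemma normalizedDeriv_E₄ (z : ℍ) :
    normalizedDerivOfComplex E₄ z = (EisensteinSeries.E2 z * E₄ z - E₆ z) / 3 := by
  have h : serreDerivative 4 E₄ + (1 / 3 : ℂ) • ⇑E₆ = 0 := by
    refine eq_zero_of_slash_invariant_of_isZeroAtImInfty (k := 6) (by norm_num)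
      ((serreDerivative_mdifferentiable _ E₄.holo').add (E₆.holo'.const_smul _)) (fun γ ↦ ?_) ?_
    · rw [SlashAction.add_slash, SL_smul_slash, ModularForm.slash_SL_eq]
      congr 1
      exact_mod_cast serreDerivative_slash_invariant (k := 4) E₄.holo' (ModularForm.slash_SL_eq _ γ)
    · refine isZeroAtImInfty_serreDerivative_add E₄.holo'
        (tendsto_E_atImInfty (by norm_num) ⟨2, rfl⟩) ?_
      convert! (tendsto_E_atImInfty (k := 6) (by norm_num) ⟨3, rfl⟩).const_smul (1 / 3 : ℂ) using 2
      norm_num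
  have := congrFun h z
  simp only [Pi.add_apply, serreDerivative_apply, Pi.smul_apply, smul_eq_mul, Pi.zero_apply] at this
  linear_combination this

/-- Ramanujan's identity `D E₆ = (E₂ E₆ - E₄²) / 2`. -/
lemma normalizedDeriv_E₆ (z : ℍ) :
    normalizedDerivOfComplex E₆ z = (EisensteinSeries.E2 z * E₆ z - E₄ z ^ 2) / 2 := by
  have h : serreDerivative 6 E₆ + (1 / 2 : ℂ) • (⇑E₄ * ⇑E₄) = 0 := by
    refine eq_zero_of_slash_invariant_of_isZeroAtImInfty (k := 8) (by norm_num)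
      ((serreDerivative_mdifferentiable _ E₆.holo').add
        ((E₄.holo'.mul E₄.holo').const_smul _)) (fun γ ↦ ?_) ?_
    · rw [SlashAction.add_slash, SL_smul_slash, show (8 : ℤ) = 4 + 4 by norm_num,
        mul_slash_SL2, ModularForm.slash_SL_eq]
      congr 1
      exact_mod_cast serreDerivative_slash_invariant (k := 6) E₆.holo' (ModularForm.slash_SL_eq _ γ)
    · refine isZeroAtImInfty_serreDerivative_add E₆.holo'
        (tendsto_E_atImInfty (by norm_num) ⟨3, rfl⟩) ?_
      have h4 := tendsto_E_atImInfty (k := 4) (by norm_num) ⟨2, rfl⟩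
      convert! (h4.mul h4).const_smul (1 / 2 : ℂ) using 2
      norm_num
  have := congrFun h z
  simp only [Pi.add_apply, serreDerivative_apply, Pi.smul_apply, smul_eq_mul, Pi.zero_apply,
    Pi.mul_apply] at this
  linear_combination this

/-- The Serre derivative of `E₂` transforms like a modular form of weight four. -/
lemma serreDerivative_one_E2_slash (γ : SL(2, ℤ)) :
    serreDerivative 1 EisensteinSeries.E2 ∣[(4 : ℤ)] γ =
      serreDerivative 1 EisensteinSeries.E2 := by
  have hE2 := E2_slash_action γ
  have hD2 : MDiff (D2 γ) := by
    intro z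
    refine UpperHalfPlane.mdifferentiableAt_iff.mpr (DifferentiableAt.congr_of_eventuallyEq
      ((hasDerivAt_denom_zpow γ (-1) z).const_mul (2 * π * Complex.I * γ 1 0)).differentiableAt ?_)
    filter_upwards [isOpen_upperHalfPlaneSet.mem_nhds z.im_pos] with w hw
    simp [D2, ofComplex_apply_of_im_pos hw, div_eq_mul_inv]
  have hDD2 (z : ℍ) : normalizedDerivOfComplex (D2 γ) z =
      -(γ 1 0 : ℂ) ^ 2 / denom γ z ^ 2 := by
    have h := (hasDerivAt_denom_zpow γ (-1) z).const_mul (2 * π * Complex.I * γ 1 0)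
    have hcongr : D2 γ ∘ ofComplex =ᶠ[𝓝 ↑z]
        fun w ↦ 2 * π * Complex.I * γ 1 0 * denom γ w ^ (-1 : ℤ) := by
      filter_upwards [isOpen_upperHalfPlaneSet.mem_nhds z.im_pos] with w hw
      simp [D2, ofComplex_apply_of_im_pos hw, div_eq_mul_inv]
    rw [normalizedDerivOfComplex, (h.congr_of_eventuallyEq hcongr).deriv]
    have := denom_ne_zero γ z
    have h2 : (-1 - 1 : ℤ) = -(2 : ℕ) := by norm_num
    rw [h2, zpow_neg, zpow_natCast]
    field_simp
    simp [sq]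
  have hD := normalizedDerivOfComplex_SL_slash (k := 2) (γ := γ) E2_mdifferentiable
  rw [hE2, normalizedDerivOfComplex_sub _ _ E2_mdifferentiable (hD2.const_smul _),
    normalizedDerivOfComplex_smul _ _ hD2] at hD
  have hsq : (EisensteinSeries.E2 * EisensteinSeries.E2) ∣[(4 : ℤ)] γ =
      (EisensteinSeries.E2 - (1 / (2 * riemannZeta 2)) • D2 γ) *
        (EisensteinSeries.E2 - (1 / (2 * riemannZeta 2)) • D2 γ) := by
    rw [show (4 : ℤ) = 2 + 2 by norm_num, mul_slash_SL2, hE2]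
  have hser : serreDerivative 1 EisensteinSeries.E2 =
      normalizedDerivOfComplex EisensteinSeries.E2 +
        (-(1 / 12) : ℂ) • (EisensteinSeries.E2 * EisensteinSeries.E2) := by
    ext z
    simp only [serreDerivative_apply, Pi.add_apply, Pi.smul_apply, Pi.mul_apply, smul_eq_mul]
    ring
  rw [hser, SlashAction.add_slash, SL_smul_slash, hsq]
  ext z
  have hDz := congrFun hD z
  have hc : 1 / (2 * riemannZeta 2) = -12 * (2 * π * Complex.I)⁻¹ ^ 2 := by
    have := Complex.ofReal_ne_zero.mpr Real.pi_ne_zero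
    rw [riemannZeta_two]
    field_simp
    norm_num
  have hanom : 1 / (2 * riemannZeta 2) * D2 γ z =
      -12 * (2 * π * Complex.I)⁻¹ * (γ 1 0 / denom γ z) := by
    rw [hc, D2]
    field_simp [Complex.two_pi_I_ne_zero]
  simp only [Pi.sub_apply, Pi.smul_apply, hDD2, smul_eq_mul, hanom] at hDz
  rw [hc, show (2 + 2 : ℤ) = 4 by norm_num] at hDz
  push_cast at hDz
  simp only [Pi.add_apply, Pi.sub_apply, Pi.smul_apply, Pi.mul_apply, smul_eq_mul, hanom]
  linear_combination -hDz

/-- Ramanujan's identity `D E₂ = (E₂² - E₄) / 12`. -/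
lemma normalizedDeriv_E2 (z : ℍ) :
    normalizedDerivOfComplex EisensteinSeries.E2 z =
      (EisensteinSeries.E2 z ^ 2 - E₄ z) / 12 := by
  have h : serreDerivative 1 EisensteinSeries.E2 + (1 / 12 : ℂ) • ⇑E₄ = 0 := by
    refine eq_zero_of_slash_invariant_of_isZeroAtImInfty (k := 4) (by norm_num)
      ((serreDerivative_mdifferentiable _ E2_mdifferentiable).add
        (E₄.holo'.const_smul _)) (fun γ ↦ ?_) ?_
    · rw [SlashAction.add_slash, SL_smul_slash, ModularForm.slash_SL_eq,
        serreDerivative_one_E2_slash]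
    · refine isZeroAtImInfty_serreDerivative_add E2_mdifferentiable tendsto_E2_atImInfty ?_
      convert! (tendsto_E_atImInfty (k := 4) (by norm_num) ⟨2, rfl⟩).const_smul (1 / 12 : ℂ)
        using 2
      norm_num
  have := congrFun h z
  simp only [Pi.add_apply, serreDerivative_apply, Pi.smul_apply, smul_eq_mul, Pi.zero_apply] at this
  linear_combination this

end RamanujanIdentities

section ComplexDerivatives

open UpperHalfPlane hiding I J
open EisensteinSeries ModularForm Derivative ArithmeticFunction
open scoped Manifold MatrixGroups

/-- The quasimodular Eisenstein series `E₂` as a function on `ℂ`. -/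
def E2C (τ : ℂ) : ℂ := EisensteinSeries.E2 (ofComplex τ)

lemma E4_coe (z : ℍ) : E4 z = E₄ z := by
  rw [q_expansion_bernoulli (by norm_num) ⟨2, rfl⟩, show bernoulli 4 = -1 / 30 by decide +kernel,
    E4,
    ← tsum_pnat_eq_tsum_succ (f := fun n ↦ (∑ d ∈ n.divisors, (d : ℂ) ^ 3) * qq z ^ n)]
  norm_num [sigma_apply, qq]

lemma E6_coe (z : ℍ) : E6 z = E₆ z := by
  rw [q_expansion_bernoulli (by norm_num) ⟨3, rfl⟩, show bernoulli 6 = 1 / 42 by decide +kernel,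
    E6,
    ← tsum_pnat_eq_tsum_succ (f := fun n ↦ (∑ d ∈ n.divisors, (d : ℂ) ^ 5) * qq z ^ n)]
  norm_num [sigma_apply, qq]

lemma dedekindEta_eq_eta : dedekindEta = ModularForm.eta := by
  ext z
  simp only [dedekindEta, ModularForm.eta, eta_q_eq_pow, qq, Function.Periodic.qParam]
  congr 2
  push_cast
  ring

lemma E4_cube_sub_E6_sq {z : ℂ} (hz : 0 < z.im) :
    E4 z ^ 3 - E6 z ^ 2 = 1728 * dedekindEta z ^ 24 := by
  have h := discriminant_eq_E₄_cube_sub_E₆_sq ⟨z, hz⟩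
  rw [← E4_coe, ← E6_coe, discriminant, ← dedekindEta_eq_eta] at h
  change dedekindEta z ^ 24 = (E4 z ^ 3 - E6 z ^ 2) / 1728 at h
  rw [h]
  ring

lemma dedekindEta_ne_zero {z : ℂ} (hz : 0 < z.im) : dedekindEta z ≠ 0 := by
  rw [dedekindEta_eq_eta]
  exact eta_ne_zero hz

lemma E4_cube_sub_E6_sq_ne_zero {z : ℂ} (hz : 0 < z.im) : E4 z ^ 3 - E6 z ^ 2 ≠ 0 := by
  rw [E4_cube_sub_E6_sq hz]
  exact mul_ne_zero (by norm_num) (pow_ne_zero _ (dedekindEta_ne_zero hz))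

lemma hasDerivAt_of_mdifferentiable {F : ℍ → ℂ} (hF : MDiff F) {g : ℂ → ℂ}
    (hg : ∀ z : ℍ, g z = F z) (z : ℍ) :
    HasDerivAt g (2 * Real.pi * Complex.I * normalizedDerivOfComplex F z) z := by
  rw [normalizedDerivOfComplex, mul_inv_cancel_left₀ Complex.two_pi_I_ne_zero]
  refine (UpperHalfPlane.mdifferentiableAt_iff.mp (hF z)).hasDerivAt.congr_of_eventuallyEq ?_
  filter_upwards [isOpen_upperHalfPlaneSet.mem_nhds z.im_pos] with w hw
  rw [Function.comp_apply, ofComplex_apply_of_im_pos hw, ← hg]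

lemma E2C_coe (z : ℍ) : E2C z = EisensteinSeries.E2 z := by rw [E2C, ofComplex_apply]

lemma hasDerivAt_E2C {z : ℂ} (hz : 0 < z.im) :
    HasDerivAt E2C (2 * Real.pi * Complex.I * ((E2C z ^ 2 - E4 z) / 12)) z := by
  have h := hasDerivAt_of_mdifferentiable E2_mdifferentiable E2C_coe ⟨z, hz⟩
  rwa [normalizedDeriv_E2, ← E2C_coe, ← E4_coe] at h

lemma hasDerivAt_E4 {z : ℂ} (hz : 0 < z.im) :
    HasDerivAt E4 (2 * Real.pi * Complex.I * ((E2C z * E4 z - E6 z) / 3)) z := by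
  have h := hasDerivAt_of_mdifferentiable (F := E₄) E₄.holo' E4_coe ⟨z, hz⟩
  rwa [normalizedDeriv_E₄, ← E2C_coe, ← E4_coe, ← E6_coe] at h

lemma hasDerivAt_E6 {z : ℂ} (hz : 0 < z.im) :
    HasDerivAt E6 (2 * Real.pi * Complex.I * ((E2C z * E6 z - E4 z ^ 2) / 2)) z := by
  have h := hasDerivAt_of_mdifferentiable (F := E₆) E₆.holo' E6_coe ⟨z, hz⟩
  rwa [normalizedDeriv_E₆, ← E2C_coe, ← E4_coe, ← E6_coe] at h

lemma hasDerivAt_dedekindEta {z : ℂ} (hz : 0 < z.im) :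
    HasDerivAt dedekindEta (2 * Real.pi * Complex.I * (E2C z * dedekindEta z / 24)) z := by
  have hd := (differentiableAt_eta_of_mem_upperHalfPlaneSet hz).hasDerivAt
  have hl := logDeriv_eta_eq_E2 ⟨z, hz⟩
  rw [← E2C_coe] at hl
  change deriv ModularForm.eta z / ModularForm.eta z = Real.pi * Complex.I / 12 * E2C z at hl
  rw [div_eq_iff (eta_ne_zero hz)] at hl
  rw [dedekindEta_eq_eta]
  convert! hd using 1
  rw [hl]
  ring

lemma hasDerivAt_J {z : ℂ} (hz : 0 < z.im) :
    HasDerivAt J (2 * Real.pi * Complex.I *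
      -(E4 z ^ 2 * E6 z / (E4 z ^ 3 - E6 z ^ 2))) z := by
  have h0 := E4_cube_sub_E6_sq_ne_zero hz
  have h4 := (hasDerivAt_E4 hz).fun_pow 3
  have h6 := (hasDerivAt_E6 hz).fun_pow 2
  convert! h4.fun_div (h4.fun_sub h6) h0 using 1
  field_simp
  ring

lemma J_eq_zero_iff {z : ℂ} (hz : 0 < z.im) : J z = 0 ↔ E4 z = 0 := by
  simp [J, E4_cube_sub_E6_sq_ne_zero hz]

lemma J_sub_one {z : ℂ} (hz : 0 < z.im) : J z - 1 = E6 z ^ 2 / (E4 z ^ 3 - E6 z ^ 2) := by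
  have h0 := E4_cube_sub_E6_sq_ne_zero hz
  rw [J]
  field_simp
  ring

lemma rho_im_pos : 0 < rho.im := by
  rw [rho, show (2 * Real.pi * Complex.I / 3 : ℂ) = ((2 * Real.pi / 3 : ℝ) : ℂ) * Complex.I by
    push_cast; ring, Complex.exp_ofReal_mul_I_im]
  apply Real.sin_pos_of_pos_of_lt_pi <;> linarith [Real.pi_pos]

lemma rho_pow_three : rho ^ 3 = 1 := by
  rw [rho, ← Complex.exp_nat_mul, ← Complex.exp_two_pi_mul_I]
  congr 1
  push_cast
  ring

lemma rho_ne_one : rho ≠ 1 := fun h ↦ by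
  have := rho_im_pos
  simp [h] at this

lemma neg_inv_rho : -rho⁻¹ = rho + 1 := by
  have h0 : rho ≠ 0 := fun h ↦ by simpa [h] using rho_pow_three
  field_simp
  apply mul_left_cancel₀ (sub_ne_zero.mpr rho_ne_one)
  linear_combination -rho_pow_three

lemma E4_add_one (z : ℂ) : E4 (z + 1) = E4 z := by
  have hq : qq (z + 1) = qq z := by
    rw [qq, mul_add, mul_one, Complex.exp_add, Complex.exp_two_pi_mul_I, mul_one, qq]
  rw [E4, hq, E4]

lemma E4_rho : E4 rho = 0 := by
  have h := congrFun (ModularForm.slash_SL_eq E₄ ModularGroup.S) ⟨rho, rho_im_pos⟩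
  rw [SlashInvariantForm.slash_S_apply, ← E4_coe, ← E4_coe] at h
  change E4 (-rho)⁻¹ * rho ^ (-(4 : ℕ) : ℤ) = E4 rho at h
  rw [inv_neg, neg_inv_rho, E4_add_one, zpow_neg, zpow_natCast, pow_succ, rho_pow_three, one_mul]
    at h
  have h0 : rho ≠ 0 := fun h ↦ by simpa [h] using rho_pow_three
  field_simp at h
  exact (mul_eq_zero.mp (by linear_combination -h : E4 rho * (rho - 1) = 0)).resolve_right
    (sub_ne_zero.mpr rho_ne_one)

end ComplexDerivatives

section AlgebraicSystem

open Finset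

lemma sum_sum_erase_comm {ι M : Type*} [Fintype ι] [DecidableEq ι] [AddCommMonoid M]
    (F : ι → ι → M) : ∑ i, ∑ j ∈ univ.erase i, F i j = ∑ i, ∑ j ∈ univ.erase i, F j i :=
  sum_comm' fun i j ↦ by simp [eq_comm]

/-- A function symmetric up to a correction sums to half of the correction. -/
lemma sum_sum_erase_eq_of_add_swap {ι : Type*} [Fintype ι] [DecidableEq ι] {F G : ι → ι → ℂ}
    (h : ∀ i j, i ≠ j → F i j + F j i = G i j) :
    2 * ∑ i, ∑ j ∈ univ.erase i, F i j = ∑ i, ∑ j ∈ univ.erase i, G i j := by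
  rw [two_mul]
  nth_rw 2 [sum_sum_erase_comm]
  simp only [← sum_add_distrib]
  exact sum_congr rfl fun i _ ↦ sum_congr rfl fun j hj ↦ h i j (ne_of_mem_erase hj).symm

/-- The rational identity satisfied by `∑ 1 / (t - xᵢ)` when the `xᵢ` are balanced. -/
lemma balanced_sum_inv_identity {n : ℕ} {x : Fin n → ℂ} (hinj : Function.Injective x)
    (h0 : ∀ i, x i ≠ 0) (h1 : ∀ i, x i ≠ 1)
    (hsys : ∀ i, 8 / x i + 3 / (x i - 1) + ∑ j ∈ univ.erase i, 12 / (x i - x j) = 0)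
    {t : ℂ} (ht : ∀ i, t ≠ x i) :
    t * ∑ i, (t - x i)⁻¹ + (t - 1) * (8 / 3 * ∑ i, (t - x i)⁻¹ +
      2 * t * ((∑ i, (t - x i)⁻¹) ^ 2 - ∑ i, (t - x i)⁻¹ ^ 2)) = 2 * n ^ 2 + 5 / 3 * n := by
  have hx (i j : Fin n) (hij : i ≠ j) : x i - x j ≠ 0 := sub_ne_zero.mpr (hinj.ne hij)
  have ht' (i : Fin n) : t - x i ≠ 0 := sub_ne_zero.mpr (ht i)
  have h1' (i : Fin n) : x i - 1 ≠ 0 := sub_ne_zero.mpr (h1 i)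
  set s : Fin n → ℂ := fun i ↦ ∑ j ∈ univ.erase i, 12 / (x i - x j) with hs
  have hs_eq (i : Fin n) : s i = -(8 / x i + 3 / (x i - 1)) := by linear_combination hsys i
  have hsum : 2 * ∑ i, s i = 0 := by
    rw [sum_sum_erase_eq_of_add_swap (G := fun _ _ ↦ 0)]
    · simp
    · intro i j hij
      have := hx i j hij
      have := hx j i hij.symm
      field_simp
      ring
  have hmom : 2 * ∑ i, x i * s i = 12 * (n * (n - 1)) := by
    have (i : Fin n) : x i * s i = ∑ j ∈ univ.erase i, x i * (12 / (x i - x j)) := mul_sum ..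
    simp only [this]
    rw [sum_sum_erase_eq_of_add_swap (G := fun _ _ ↦ 12)]
    · rcases n with - | n
      · simp
      · simp
        ring
    · intro i j hij
      have := hx i j hij
      have := hx j i hij.symm
      field_simp
      ring
  have hC : (∑ i, (t - x i)⁻¹) ^ 2 - ∑ i, (t - x i)⁻¹ ^ 2 = 1 / 6 * ∑ i, (t - x i)⁻¹ * s i := by
    have : 2 * ∑ i, (t - x i)⁻¹ * s i =
        12 * ∑ i, ∑ j ∈ univ.erase i, (t - x i)⁻¹ * (t - x j)⁻¹ := by
      have (i : Fin n) : (t - x i)⁻¹ * s i =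
        ∑ j ∈ univ.erase i, (t - x i)⁻¹ * (12 / (x i - x j)) := mul_sum ..
      simp only [this]
      rw [sum_sum_erase_eq_of_add_swap (G := fun i j ↦ 12 * ((t - x i)⁻¹ * (t - x j)⁻¹))]
      · simp only [mul_sum]
      intro i j hij
      have := hx i j hij
      have := hx j i hij.symm
      have := ht' i
      have := ht' j
      field_simp
      ring
    have hsq : (∑ i, (t - x i)⁻¹) ^ 2 = ∑ i, ((t - x i)⁻¹ ^ 2 +
        ∑ j ∈ univ.erase i, (t - x i)⁻¹ * (t - x j)⁻¹) := by
      rw [sq, sum_mul_sum]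
      refine sum_congr rfl fun i _ ↦ ?_
      rw [← add_sum_erase _ _ (mem_univ i), sq]
    rw [hsq, sum_add_distrib]
    linear_combination -(1 / 12) * this
  have hterm (i : Fin n) : (t - 1) * (t * ((t - x i)⁻¹ * s i)) =
      -(8 * (t - 1) + 3 * t) * (t - x i)⁻¹ - 8 * (t - 1) * (x i)⁻¹ - 3 * t * (x i - 1)⁻¹ := by
    rw [hs_eq]
    have := ht' i
    have := h0 i
    have := h1' i
    field_simp
    ring
  have hterm2 (i : Fin n) : s i = -8 * (x i)⁻¹ - 3 * (x i - 1)⁻¹ := by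
    rw [hs_eq]
    ring
  have hterm3 (i : Fin n) : x i * s i = -11 - 3 * (x i - 1)⁻¹ := by
    rw [hs_eq]
    have := h0 i
    have := h1' i
    field_simp
    ring
  have e1 : (t - 1) * (t * ∑ i, (t - x i)⁻¹ * s i) = -(8 * (t - 1) + 3 * t) * ∑ i, (t - x i)⁻¹ -
      8 * (t - 1) * ∑ i, (x i)⁻¹ - 3 * t * ∑ i, (x i - 1)⁻¹ := by
    simp only [mul_sum, ← sum_sub_distrib]
    exact sum_congr rfl fun i _ ↦ hterm i
  have e2 : ∑ i, s i = -8 * ∑ i, (x i)⁻¹ - 3 * ∑ i, (x i - 1)⁻¹ := by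
    simp only [mul_sum, ← sum_sub_distrib]
    exact sum_congr rfl fun i _ ↦ hterm2 i
  have e3 : ∑ i, x i * s i = -11 * n - 3 * ∑ i, (x i - 1)⁻¹ := by
    simp only [hterm3, sum_sub_distrib, mul_sum]
    simp
    ring
  rw [hC]
  linear_combination 1 / 3 * e1 - (t - 1) * (1 / 3 * e2 - hsum / 6) - (1 / 3 * e3 - hmom / 6)

end AlgebraicSystem

section Residue

/-- If `f = F / G²` near a simple zero `w` of `G` and the Schwarz derivative of a primitive of `f`
extends continuously to `w`, then `f` has zero residue at `w`. -/
lemma tendsto_deriv_sq_mul_of_schwarzian {f F G S : ℂ → ℂ} {w : ℂ}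
    (hf : ∀ᶠ z in 𝓝[≠] w, f z = F z / G z ^ 2) (hF : AnalyticAt ℂ F w) (hFw : F w ≠ 0)
    (hG : AnalyticAt ℂ G w) (hGw : G w = 0) (hG' : deriv G w ≠ 0) (hS : ContinuousAt S w)
    (hschw : ∀ᶠ z in 𝓝[≠] w,
      deriv (fun z ↦ deriv f z / f z) z - 1 / 2 * (deriv f z / f z) ^ 2 = S z) :
    Tendsto (fun τ ↦ deriv (fun z ↦ (z - w) ^ 2 * f z) τ) (𝓝[≠] w) (𝓝 0) := by
  have hdG : AnalyticAt ℂ (dslope G w) w := by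
    obtain ⟨p, hp⟩ := hG
    exact ⟨_, hp.has_fpower_series_dslope_fslope⟩
  have hdGw : dslope G w w ≠ 0 := by rwa [dslope_same]
  set φ : ℂ → ℂ := fun z ↦ F z / dslope G w z ^ 2 with hφ_def
  have hφ : AnalyticAt ℂ φ w := hF.fun_div (hdG.fun_pow 2) (pow_ne_zero 2 hdGw)
  have hφw : φ w ≠ 0 := div_ne_zero hFw (pow_ne_zero 2 hdGw)
  have hfφ : ∀ᶠ z in 𝓝[≠] w, f z = φ z / (z - w) ^ 2 := by
    filter_upwards [hf, self_mem_nhdsWithin] with z hz hzw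
    have := sub_smul_dslope G w z
    rw [hGw, sub_zero, smul_eq_mul] at this
    rw [hz, ← this, hφ_def, mul_pow, div_div, mul_comm]
  have hv : AnalyticAt ℂ (fun z ↦ deriv φ z / φ z) w := hφ.deriv.fun_div hφ hφw
  have hlog : ∀ᶠ z in 𝓝[≠] w, deriv f z / f z = deriv φ z / φ z - 2 / (z - w) := by
    filter_upwards [eventually_nhdsNE_eventually_nhds_iff.mpr hfφ, self_mem_nhdsWithin,
      nhdsWithin_le_nhds hφ.eventually_analyticAt,
      nhdsWithin_le_nhds (hφ.continuousAt.eventually_ne hφw)] with z hz hzw hφz hφ0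
    have hzw' : z - w ≠ 0 := sub_ne_zero.mpr hzw
    have hd : HasDerivAt f
        ((deriv φ z * (z - w) ^ 2 - φ z * (2 * (z - w))) / ((z - w) ^ 2) ^ 2) z := by
      refine HasDerivAt.congr_of_eventuallyEq ?_ hz
      simpa using hφz.differentiableAt.hasDerivAt.fun_div
        (((hasDerivAt_id z).sub_const w).fun_pow 2) (pow_ne_zero 2 hzw')
    rw [hd.deriv, hz.self_of_nhds]
    field_simp
  have hvS : ∀ᶠ z in 𝓝[≠] w, deriv φ z / φ z =
      (z - w) / 2 * (S z - deriv (fun z ↦ deriv φ z / φ z) z + (deriv φ z / φ z) ^ 2 / 2) := by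
    filter_upwards [eventually_nhdsNE_eventually_nhds_iff.mpr hlog, self_mem_nhdsWithin, hschw,
      nhdsWithin_le_nhds hv.eventually_analyticAt] with z hz hzw hS hvz
    have hzw' : z - w ≠ 0 := sub_ne_zero.mpr hzw
    have hd : HasDerivAt (fun z ↦ deriv f z / f z)
        (deriv (fun z ↦ deriv φ z / φ z) z + 2 / (z - w) ^ 2) z := by
      refine HasDerivAt.congr_of_eventuallyEq ?_ hz
      convert! hvz.differentiableAt.hasDerivAt.fun_sub
        ((hasDerivAt_const z (2 : ℂ)).fun_div ((hasDerivAt_id z).sub_const w) hzw') using 1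
      simp
      ring
    rw [← hS, hd.deriv, hz.self_of_nhds]
    generalize deriv φ z / φ z = v
    field_simp
    ring
  have hlim : Tendsto (fun z ↦ deriv φ z / φ z) (𝓝[≠] w) (𝓝 0) := by
    have hc : ContinuousAt (fun z ↦ (z - w) / 2 *
        (S z - deriv (fun z ↦ deriv φ z / φ z) z + (deriv φ z / φ z) ^ 2 / 2)) w :=
      ((continuousAt_id.sub continuousAt_const).div_const 2).mul
        ((hS.sub hv.deriv.continuousAt).add ((hv.continuousAt.pow 2).div_const 2))
    have := hc.tendsto.mono_left (nhdsWithin_le_nhds (s := {w}ᶜ))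
    simp only [sub_self, zero_div, zero_mul] at this
    exact this.congr' (hvS.mono fun _ h ↦ h.symm)
  have hφ' : deriv φ w = 0 := by
    have := tendsto_nhds_unique hlim (hv.continuousAt.tendsto.mono_left nhdsWithin_le_nhds)
    simpa [hφw] using this.symm
  have := hφ.deriv.continuousAt.tendsto.mono_left (nhdsWithin_le_nhds (s := {w}ᶜ))
  rw [hφ'] at this
  refine this.congr' ?_
  filter_upwards [eventually_nhdsNE_eventually_nhds_iff.mpr hfφ, self_mem_nhdsWithin] with z hz hzw
  refine (EventuallyEq.deriv_eq ?_).symm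
  filter_upwards [hz, isOpen_ne.mem_nhds hzw] with y hy hyw
  rw [hy, mul_div_cancel₀ _ (pow_ne_zero 2 (sub_ne_zero.mpr hyw))]

end Residue

section Solution

lemma analyticAt_of_differentiableAt_im_pos {g : ℂ → ℂ}
    (hg : ∀ z : ℂ, 0 < z.im → DifferentiableAt ℂ g z) {z : ℂ} (hz : 0 < z.im) :
    AnalyticAt ℂ g z :=
  DifferentiableOn.analyticAt (s := {z | 0 < z.im})
    (fun w hw ↦ (hg w hw).differentiableWithinAt)
    ((isOpen_lt continuous_const Complex.continuous_im).mem_nhds hz)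

lemma analyticAt_E4 {z : ℂ} (hz : 0 < z.im) : AnalyticAt ℂ E4 z :=
  analyticAt_of_differentiableAt_im_pos (fun _ h ↦ (hasDerivAt_E4 h).differentiableAt) hz

lemma analyticAt_J {z : ℂ} (hz : 0 < z.im) : AnalyticAt ℂ J z :=
  analyticAt_of_differentiableAt_im_pos (fun _ h ↦ (hasDerivAt_J h).differentiableAt) hz

lemma analyticAt_dedekindEta {z : ℂ} (hz : 0 < z.im) : AnalyticAt ℂ dedekindEta z :=
  analyticAt_of_differentiableAt_im_pos (fun _ h ↦ (hasDerivAt_dedekindEta h).differentiableAt) hz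

lemma f5_denom_ne_zero {n : ℕ} {x : Fin n → ℝ} {τ : ℂ} (h4 : E4 τ ≠ 0)
    (hJ : ∀ i, J τ ≠ (x i : ℂ)) : E4 τ ^ 2 * ∏ i, (J τ - (x i : ℂ)) ^ 2 ≠ 0 :=
  mul_ne_zero (pow_ne_zero 2 h4)
    (Finset.prod_ne_zero_iff.mpr fun i _ ↦ pow_ne_zero 2 (sub_ne_zero.mpr (hJ i)))

lemma analyticAt_f5 {n : ℕ} {x : Fin n → ℝ} {τ : ℂ} (hτ : 0 < τ.im) (h4 : E4 τ ≠ 0)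
    (hJ : ∀ i, J τ ≠ (x i : ℂ)) : AnalyticAt ℂ (f5 n x) τ :=
  ((analyticAt_dedekindEta hτ).fun_pow 20).fun_div
    (((analyticAt_E4 hτ).fun_pow 2).fun_mul (Finset.univ.analyticAt_fun_prod fun _ _ ↦
      ((analyticAt_J hτ).fun_sub analyticAt_const).fun_pow 2)) (f5_denom_ne_zero h4 hJ)

lemma f5_ne_zero {n : ℕ} {x : Fin n → ℝ} {τ : ℂ} (hτ : 0 < τ.im) (h4 : E4 τ ≠ 0)
    (hJ : ∀ i, J τ ≠ (x i : ℂ)) : f5 n x τ ≠ 0 :=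
  div_ne_zero (pow_ne_zero 20 (dedekindEta_ne_zero hτ)) (f5_denom_ne_zero h4 hJ)

lemma logDeriv_f5 {n : ℕ} {x : Fin n → ℝ} {τ : ℂ} (hτ : 0 < τ.im) (h4 : E4 τ ≠ 0)
    (hJ : ∀ i, J τ ≠ (x i : ℂ)) :
    deriv (f5 n x) τ / f5 n x τ = 2 * Real.pi * Complex.I * (E2C τ / 6 +
      E6 τ / E4 τ * (2 / 3 + 2 * (J τ * ∑ i, (J τ - (x i : ℂ))⁻¹))) := by
  have hη := hasDerivAt_dedekindEta hτ
  have hE := hasDerivAt_E4 hτ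
  have hJτ (i : Fin n) := (hasDerivAt_J hτ).sub_const (x i : ℂ)
  have hη0 := dedekindEta_ne_zero hτ
  have hJ0 (i : Fin n) : J τ - (x i : ℂ) ≠ 0 := sub_ne_zero.mpr (hJ i)
  have hdisc := E4_cube_sub_E6_sq_ne_zero hτ
  have hprod : ∏ i, (J τ - (x i : ℂ)) ^ 2 ≠ 0 :=
    Finset.prod_ne_zero_iff.mpr fun i _ ↦ pow_ne_zero 2 (hJ0 i)
  have hprodd : DifferentiableAt ℂ (fun z ↦ ∏ i, (J z - (x i : ℂ)) ^ 2) τ :=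
    DifferentiableAt.fun_finsetProd fun i _ ↦ (hJτ i).differentiableAt.fun_pow 2
  have hdiv := logDeriv_div (f := fun z ↦ dedekindEta z ^ 20)
    (g := fun z ↦ E4 z ^ 2 * ∏ i, (J z - (x i : ℂ)) ^ 2) τ (pow_ne_zero 20 hη0)
    (f5_denom_ne_zero h4 hJ) (hη.differentiableAt.fun_pow 20)
    ((hE.differentiableAt.fun_pow 2).fun_mul hprodd)
  have hmul := logDeriv_mul (f := fun z ↦ E4 z ^ 2) (g := fun z ↦ ∏ i, (J z - (x i : ℂ)) ^ 2) τ
    (pow_ne_zero 2 h4) hprod (hE.differentiableAt.fun_pow 2) hprodd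
  have hlprod := logDeriv_prod (s := Finset.univ) (f := fun i z ↦ (J z - (x i : ℂ)) ^ 2) (x := τ)
    (fun i _ ↦ pow_ne_zero 2 (hJ0 i)) (fun i _ ↦ (hJτ i).differentiableAt.fun_pow 2)
  have hterm (i : Fin n) : logDeriv (fun z ↦ (J z - (x i : ℂ)) ^ 2) τ =
      2 * Real.pi * Complex.I * (-2 * (E6 τ / E4 τ * J τ)) * (J τ - (x i : ℂ))⁻¹ := by
    rw [logDeriv_fun_pow (hJτ i).differentiableAt, logDeriv_apply, (hJτ i).deriv,
      div_eq_mul_inv, ← mul_assoc]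
    congr 1
    rw [J]
    field_simp
    push_cast
    ring
  change logDeriv (fun z ↦ dedekindEta z ^ 20 / (E4 z ^ 2 * ∏ i, (J z - (x i : ℂ)) ^ 2)) τ = _
  rw [hdiv, hmul, hlprod, logDeriv_fun_pow hη.differentiableAt,
    logDeriv_fun_pow hE.differentiableAt]
  simp only [hterm, ← Finset.mul_sum]
  rw [logDeriv_apply, logDeriv_apply, hη.deriv, hE.deriv]
  generalize ∑ i, (J τ - (x i : ℂ))⁻¹ = A
  field_simp
  push_cast
  ring

/-- The Schwarz derivative of a primitive of `f5`, for balanced `xᵢ`. -/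
lemma schwarzian_f5 {n : ℕ} {x : Fin n → ℝ} (hx : ∀ i, x i ∈ Set.Ioo (0 : ℝ) 1)
    (hinj : Function.Injective x)
    (hsys : ∀ i, 8 / x i + 3 / (x i - 1) + ∑ j ∈ Finset.univ.erase i, 12 / (x i - x j) = 0)
    {τ : ℂ} (hτ : 0 < τ.im) (h4 : E4 τ ≠ 0) (hJ : ∀ i, J τ ≠ (x i : ℂ)) :
    deriv (fun z : ℂ => deriv (f5 n x) z / f5 n x z) τ -
      1 / 2 * (deriv (f5 n x) τ / f5 n x τ) ^ 2 =
      2 * (Real.pi : ℂ) ^ 2 * ((12 * (n : ℂ) + 5) / 6) ^ 2 * E4 τ := by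
  have hE2 := hasDerivAt_E2C hτ
  have hE4 := hasDerivAt_E4 hτ
  have hE6 := hasDerivAt_E6 hτ
  have hJd := hasDerivAt_J hτ
  have hJ0 (i : Fin n) : J τ - (x i : ℂ) ≠ 0 := sub_ne_zero.mpr (hJ i)
  have hdisc := E4_cube_sub_E6_sq_ne_zero hτ
  have hlog : (fun z ↦ deriv (f5 n x) z / f5 n x z) =ᶠ[𝓝 τ] fun z ↦
      2 * Real.pi * Complex.I * (E2C z / 6 +
        E6 z / E4 z * (2 / 3 + 2 * (J z * ∑ i, (J z - (x i : ℂ))⁻¹))) := by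
    filter_upwards [(isOpen_lt continuous_const Complex.continuous_im).mem_nhds hτ,
      hE4.continuousAt.eventually_ne h4,
      eventually_all.mpr fun i ↦ hJd.continuousAt.eventually_ne (hJ i)] with z hz h4z hJz
    exact logDeriv_f5 hz h4z hJz
  have hsum := HasDerivAt.fun_sum (u := Finset.univ) fun (i : Fin n) _ ↦
    (hJd.sub_const (x i : ℂ)).fun_inv (hJ0 i)
  have hd := ((hE2.div_const 6).fun_add ((hE6.fun_div hE4 h4).fun_mul
    (((hJd.fun_mul hsum).const_mul 2).const_add (2 / 3)))).const_mul (2 * Real.pi * Complex.I)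
  have hid := balanced_sum_inv_identity (x := fun i ↦ (x i : ℂ)) (t := J τ)
    (Complex.ofReal_injective.comp hinj) (fun i ↦ Complex.ofReal_ne_zero.mpr (hx i).1.ne')
    (fun i ↦ Complex.ofReal_ne_one.mpr (hx i).2.ne) (fun i ↦ mod_cast hsys i) hJ
  rw [(hd.congr_of_eventuallyEq hlog).deriv, logDeriv_f5 hτ h4 hJ]
  have hsq : ∑ i, -(2 * Real.pi * Complex.I * -(E4 τ ^ 2 * E6 τ / (E4 τ ^ 3 - E6 τ ^ 2))) /
      (J τ - (x i : ℂ)) ^ 2 = 2 * Real.pi * Complex.I *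
        (E4 τ ^ 2 * E6 τ / (E4 τ ^ 3 - E6 τ ^ 2)) * ∑ i, (J τ - (x i : ℂ))⁻¹ ^ 2 := by
    rw [Finset.mul_sum]
    refine Finset.sum_congr rfl fun i _ ↦ ?_
    rw [inv_pow]
    ring
  rw [hsq]
  have hquot : E4 τ ^ 2 * E6 τ / (E4 τ ^ 3 - E6 τ ^ 2) = E6 τ / E4 τ * J τ := by
    rw [J]
    field_simp
  have hquot_sq : (E6 τ / E4 τ) ^ 2 * J τ = (J τ - 1) * E4 τ := by
    rw [J_sub_one hτ, J]
    field_simp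
  have hE6_eq : E6 τ = E6 τ / E4 τ * E4 τ := (div_mul_cancel₀ _ h4).symm
  rw [hquot]
  generalize ∑ i, (J τ - (x i : ℂ))⁻¹ ^ 2 = B at *
  generalize ∑ i, (J τ - (x i : ℂ))⁻¹ = A at *
  generalize E6 τ / E4 τ = g at *
  rw [hE6_eq]
  have hI := Complex.I_sq
  field_simp
  linear_combination 7776 * Complex.I ^ 2 * (-E4 τ * hid -
    (8 / 3 * A + 2 * J τ * (A ^ 2 - B)) * hquot_sq) - 108 * (12 * n + 5) ^ 2 * E4 τ * hI

/-- The system `E^n_{8,3,12}` has no solution in `(0,1)` with two or more points: the leftmost one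
would have to lie to the right of `8/11` and the rightmost one to the left of it. -/
lemma subsingleton_of_system {ι : Type*} [Fintype ι] [DecidableEq ι] {x : ι → ℝ}
    (hx : ∀ i, x i ∈ Set.Ioo (0 : ℝ) 1) (hinj : Function.Injective x)
    (hsys : ∀ i, 8 / x i + 3 / (x i - 1) +
      ∑ j ∈ Finset.univ.erase i, 12 / (x j - x i) = 0) : Subsingleton ι := by
  rw [← not_nontrivial_iff_subsingleton]
  intro hι
  have hpot (i : ι) : 8 / x i + 3 / (x i - 1) = (8 - 11 * x i) / (x i * (1 - x i)) := by
    have h0 := (hx i).1.ne'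
    have h1 : 1 - x i ≠ 0 := by linarith [(hx i).2]
    have h2 : x i - 1 ≠ 0 := by linarith [(hx i).2]
    field_simp
    ring
  have hne (i : ι) : (Finset.univ.erase i).Nonempty :=
    let ⟨j, hj⟩ := exists_ne i
    ⟨j, by simpa using hj⟩
  have hden (i : ι) : 0 < x i * (1 - x i) := mul_pos (hx i).1 (by linarith [(hx i).2])
  obtain ⟨a, ha⟩ := Finite.exists_min x
  obtain ⟨b, hb⟩ := Finite.exists_max x
  have hsa : 0 < ∑ j ∈ Finset.univ.erase a, 12 / (x j - x a) :=
    Finset.sum_pos (fun j hj ↦ div_pos (by norm_num) (sub_pos.mpr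
      ((ha j).lt_of_ne (hinj.ne (Finset.ne_of_mem_erase hj).symm)))) (hne a)
  have hsb : ∑ j ∈ Finset.univ.erase b, 12 / (x j - x b) < 0 :=
    Finset.sum_neg (fun j hj ↦ div_neg_of_pos_of_neg (by norm_num) (sub_neg.mpr
      ((hb j).lt_of_ne (hinj.ne (Finset.ne_of_mem_erase hj))))) (hne b)
  have hpa : (8 - 11 * x a) / (x a * (1 - x a)) < 0 := by linarith [hpot a, hsys a]
  have hpb : 0 < (8 - 11 * x b) / (x b * (1 - x b)) := by linarith [hpot b, hsys b]
  have ha8 : 8 - 11 * x a < 0 := by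
    by_contra! h
    exact hpa.not_ge (div_nonneg h (hden a).le)
  have hb8 := (div_pos_iff_of_pos_right (hden b)).mp hpb
  linarith [ha b]

lemma eventually_E4_ne_zero {w : ℂ} (hw : 0 < w.im) : ∀ᶠ z in 𝓝[≠] w, E4 z ≠ 0 := by
  by_cases h : E4 w = 0
  · have h6 : E6 w ≠ 0 := fun h6 ↦ E4_cube_sub_E6_sq_ne_zero hw (by simp [h, h6])
    simpa [h] using (hasDerivAt_E4 hw).eventually_ne (c := 0) (by simpa [h] using h6)
  · exact nhdsWithin_le_nhds ((hasDerivAt_E4 hw).continuousAt.eventually_ne h)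

lemma deriv_J_ne_zero {w : ℂ} (hw : 0 < w.im) (h0 : J w ≠ 0) (h1 : J w ≠ 1) : deriv J w ≠ 0 := by
  have hd := E4_cube_sub_E6_sq_ne_zero hw
  have h4 : E4 w ≠ 0 := (J_eq_zero_iff hw).not.mp h0
  have h6 : E6 w ≠ 0 := fun h6 ↦ sub_ne_zero.mpr h1 (by simp [J_sub_one hw, h6])
  rw [(hasDerivAt_J hw).deriv]
  simp [h4, h6, hd]

lemma eventually_J_ne {w : ℂ} (hw : 0 < w.im) {c : ℂ} (h0 : c ≠ 0) (h1 : c ≠ 1) :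
    ∀ᶠ z in 𝓝[≠] w, J z ≠ c := by
  by_cases h : J w = c
  · refine ((hasDerivAt_J hw).differentiableAt.hasDerivAt).eventually_ne ?_
    exact deriv_J_ne_zero hw (h ▸ h0) (h ▸ h1)
  · exact nhdsWithin_le_nhds ((hasDerivAt_J hw).continuousAt.eventually_ne h)

lemma eventually_schwarzian_f5 {n : ℕ} {x : Fin n → ℝ} (hx : ∀ i, x i ∈ Set.Ioo (0 : ℝ) 1)
    (hinj : Function.Injective x)
    (hsys : ∀ i, 8 / x i + 3 / (x i - 1) + ∑ j ∈ Finset.univ.erase i, 12 / (x i - x j) = 0)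
    {w : ℂ} (hw : 0 < w.im) :
    ∀ᶠ z in 𝓝[≠] w, deriv (fun z ↦ deriv (f5 n x) z / f5 n x z) z -
      1 / 2 * (deriv (f5 n x) z / f5 n x z) ^ 2 =
      2 * (Real.pi : ℂ) ^ 2 * ((12 * (n : ℂ) + 5) / 6) ^ 2 * E4 z := by
  filter_upwards [nhdsWithin_le_nhds
    ((isOpen_lt continuous_const Complex.continuous_im).mem_nhds hw), eventually_E4_ne_zero hw,
    eventually_all.mpr fun i ↦ eventually_J_ne hw (Complex.ofReal_ne_zero.mpr (hx i).1.ne')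
      (Complex.ofReal_ne_one.mpr (hx i).2.ne)] with z hz h4 hJ
  exact schwarzian_f5 hx hinj hsys hz h4 hJ

lemma tendsto_deriv_f5_rho {n : ℕ} {x : Fin n → ℝ} (hx : ∀ i, x i ∈ Set.Ioo (0 : ℝ) 1)
    (hinj : Function.Injective x)
    (hsys : ∀ i, 8 / x i + 3 / (x i - 1) + ∑ j ∈ Finset.univ.erase i, 12 / (x i - x j) = 0) :
    Tendsto (fun τ : ℂ ↦ deriv (fun z : ℂ ↦ (z - rho) ^ 2 * f5 n x z) τ) (𝓝[≠] rho) (𝓝 0) := by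
  have hJ (i : Fin n) : J rho - (x i : ℂ) ≠ 0 := by
    rw [(J_eq_zero_iff rho_im_pos).mpr E4_rho, zero_sub, neg_ne_zero]
    exact Complex.ofReal_ne_zero.mpr (hx i).1.ne'
  have hprod : ∏ i, (J rho - (x i : ℂ)) ^ 2 ≠ 0 :=
    Finset.prod_ne_zero_iff.mpr fun i _ ↦ pow_ne_zero 2 (hJ i)
  have h6 : E6 rho ≠ 0 := fun h6 ↦
    E4_cube_sub_E6_sq_ne_zero rho_im_pos (by simp [E4_rho, h6])
  refine tendsto_deriv_sq_mul_of_schwarzian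
    (F := fun z ↦ dedekindEta z ^ 20 / ∏ i, (J z - (x i : ℂ)) ^ 2) (G := E4)
    (Eventually.of_forall fun z ↦ ?_) ?_ ?_ (analyticAt_E4 rho_im_pos) E4_rho ?_ ?_
    (eventually_schwarzian_f5 hx hinj hsys rho_im_pos)
  · rw [f5, div_div, mul_comm (E4 z ^ 2)]
  · exact ((analyticAt_dedekindEta rho_im_pos).fun_pow 20).fun_div
      (Finset.univ.analyticAt_fun_prod fun _ _ ↦
        ((analyticAt_J rho_im_pos).fun_sub analyticAt_const).fun_pow 2) hprod
  · exact div_ne_zero (pow_ne_zero 20 (dedekindEta_ne_zero rho_im_pos)) hprod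
  · simp [(hasDerivAt_E4 rho_im_pos).deriv, E4_rho, h6]
  · exact continuousAt_const.mul (hasDerivAt_E4 rho_im_pos).continuousAt

lemma tendsto_deriv_f5_of_J_eq {n : ℕ} {x : Fin n → ℝ} (hx : ∀ i, x i ∈ Set.Ioo (0 : ℝ) 1)
    (hinj : Function.Injective x)
    (hsys : ∀ i, 8 / x i + 3 / (x i - 1) + ∑ j ∈ Finset.univ.erase i, 12 / (x i - x j) = 0)
    {w : ℂ} (hw : 0 < w.im) {i : Fin n} (hJw : J w = x i) :
    Tendsto (fun τ : ℂ ↦ deriv (fun z : ℂ ↦ (z - w) ^ 2 * f5 n x z) τ) (𝓝[≠] w) (𝓝 0) := by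
  have h0 : J w ≠ 0 := hJw ▸ Complex.ofReal_ne_zero.mpr (hx i).1.ne'
  have h1 : J w ≠ 1 := hJw ▸ Complex.ofReal_ne_one.mpr (hx i).2.ne
  have hden : E4 w ^ 2 * ∏ j ∈ Finset.univ.erase i, (J w - (x j : ℂ)) ^ 2 ≠ 0 := by
    refine mul_ne_zero (pow_ne_zero 2 ((J_eq_zero_iff hw).not.mp h0))
      (Finset.prod_ne_zero_iff.mpr fun j hj ↦ pow_ne_zero 2 (sub_ne_zero.mpr ?_))
    rw [hJw, Ne, Complex.ofReal_inj]
    exact hinj.ne (Finset.ne_of_mem_erase hj).symm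
  refine tendsto_deriv_sq_mul_of_schwarzian
    (F := fun z ↦ dedekindEta z ^ 20 /
      (E4 z ^ 2 * ∏ j ∈ Finset.univ.erase i, (J z - (x j : ℂ)) ^ 2))
    (G := fun z ↦ J z - x i) (Eventually.of_forall fun z ↦ ?_) ?_ ?_
    ((analyticAt_J hw).fun_sub analyticAt_const) (sub_eq_zero.mpr hJw) ?_ ?_
    (eventually_schwarzian_f5 hx hinj hsys hw)
  · rw [f5, div_div, ← Finset.mul_prod_erase _ _ (Finset.mem_univ i)]
    ring
  · exact ((analyticAt_dedekindEta hw).fun_pow 20).fun_div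
      (((analyticAt_E4 hw).fun_pow 2).fun_mul (Finset.analyticAt_fun_prod _ fun _ _ ↦
        ((analyticAt_J hw).fun_sub analyticAt_const).fun_pow 2)) hden
  · exact div_ne_zero (pow_ne_zero 20 (dedekindEta_ne_zero hw)) hden
  · rw [deriv_sub_const_fun]
    exact deriv_J_ne_zero hw h0 h1
  · exact continuousAt_const.mul (hasDerivAt_E4 hw).continuousAt

end Solution

/-- If the `xᵢ ∈ (0,1)` solve `E^n_{8,3,12}`, then `f = η²⁰/(E₄²∏(J−xᵢ)²)` is holomorphic and
nonvanishing away from the poles, has double poles with zero residues at `ρ` and each `wᵢ`, and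
any primitive `h` of `f` satisfies `{h,τ} = 2π²((12n+5)/6)² E₄(τ)`. -/
theorem solution_12n_plus_5 (n : ℕ) (x : Fin n → ℝ) (w : Fin n → ℂ)
    (hx : ∀ i, x i ∈ Set.Ioo (0 : ℝ) 1) (hinj : Function.Injective x)
    (hsys : ∀ i, 8 / x i + 3 / (x i - 1) +
      ∑ j ∈ Finset.univ.erase i, 12 / (x j - x i) = 0)
    (hw : ∀ i, 0 < (w i).im) (hJw : ∀ i, J (w i) = (x i : ℂ)) :
    (∀ τ : ℂ, 0 < τ.im → E4 τ ≠ 0 → (∀ i, J τ ≠ (x i : ℂ)) →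
      DifferentiableAt ℂ (f5 n x) τ ∧ f5 n x τ ≠ 0) ∧
    (Tendsto
      (fun τ : ℂ => deriv (fun z : ℂ => (z - rho) ^ 2 * f5 n x z) τ)
      (𝓝[≠] rho) (𝓝 0) ∧
     ∀ i, Tendsto
      (fun τ : ℂ => deriv (fun z : ℂ => (z - w i) ^ 2 * f5 n x z) τ)
      (𝓝[≠] w i) (𝓝 0)) ∧
    (∀ τ : ℂ, 0 < τ.im → E4 τ ≠ 0 → (∀ i, J τ ≠ (x i : ℂ)) →
      deriv (fun z : ℂ => deriv (f5 n x) z / f5 n x z) τ -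
        1 / 2 * (deriv (f5 n x) τ / f5 n x τ) ^ 2 =
        2 * (Real.pi : ℂ) ^ 2 * ((12 * (n : ℂ) + 5) / 6) ^ 2 * E4 τ) := by
  have hι := subsingleton_of_system hx hinj hsys
  have hbal (i : Fin n) :
      8 / x i + 3 / (x i - 1) + ∑ j ∈ Finset.univ.erase i, 12 / (x i - x j) = 0 := by
    rw [← hsys i]
    congr 1
    exact Finset.sum_congr rfl fun j hj ↦
      absurd (Subsingleton.elim j i) (Finset.ne_of_mem_erase hj)
  exact ⟨fun τ hτ h4 hJ ↦ ⟨(analyticAt_f5 hτ h4 hJ).differentiableAt, f5_ne_zero hτ h4 hJ⟩,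
    ⟨tendsto_deriv_f5_rho hx hinj hbal,
      fun i ↦ tendsto_deriv_f5_of_J_eq hx hinj hbal (hw i) (hJw i)⟩,
    fun τ hτ h4 hJ ↦ schwarzian_f5 hx hinj hbal hτ h4 hJ⟩
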